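/- Let t ≥ 3 be an integer and L = 8t. Then M_S(L,3) ≤ L/8, and moreover: M_S(L,3) ≥ 7L/64 if t ≡ 0 (mod 8); M_S(L,3) ≥ (7L+8)/64 if t ≡ 1 (mod 8); M_S(L,3) ≥ (7L−48)/64 if t ≡ 2 or 10 (mod 24); M_S(L,3) ≥ (7L+24)/64 if t ≡ 3 (mod 24); M_S(L,3) ≥ (7L−32)/64 if t ≡ 4 or 20 (mod 24); M_S(L,3) ≥ (7L−24)/64 if t ≡ 5 or 13 (mod 24); M_S(L,3) ≥ (7L−16)/64 if t ≡ 6 (mod 8); M_S(L,3) ≥ (7L−8)/64 if t ≡ 7 (mod 8); M_S(L,3) ≥ (7L−40)/64 if t ≡ 11 or 19 (mod 24); M_S(L,3) ≥ (7L+32)/64 if t ≡ 12 (mod 24); M_S(L,3) ≥ (7L+16)/64 if t ≡ 18 (mod 24); and M_S(L,3) ≥ (7L+40)/64 if t ≡ 21 (mod 24). -/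

import Mathlib

open Finset

/-- The set of differences of a codeword `I ⊆ ℤ_L`. -/
def dset {L : ℕ} (I : Finset (ZMod L)) : Finset (ZMod L) :=
  (I ×ˢ I).image fun p => p.1 - p.2

/-- The set of nonzero differences. -/
def dstar {L : ℕ} (I : Finset (ZMod L)) : Finset (ZMod L) := dset I \ {0}

/-- The set of shifted nonzero differences `d⁺(I) = d*(I) ∪ (d*(I)+1)`. -/
def dplus {L : ℕ} (I : Finset (ZMod L)) : Finset (ZMod L) :=
  dstar I ∪ (dstar I).image (· + 1)

/-- A strongly conflict-avoiding code of length `L` and weight `ω`. -/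
def IsSCAC (L ω : ℕ) (C : Finset (Finset (ZMod L))) : Prop :=
  (∀ I ∈ C, I.card = ω) ∧
  (∀ I ∈ C, (1 : ZMod L) ∉ dstar I ∧ (-1 : ZMod L) ∉ dstar I) ∧
  ∀ I ∈ C, ∀ J ∈ C, I ≠ J → Disjoint (dplus I) (dplus J)

/-- `M_S(L,ω)`: the maximum size of an SCAC of length `L` and weight `ω`. -/
noncomputable def MS (L ω : ℕ) : ℕ :=
  sSup {n | ∃ C : Finset (Finset (ZMod L)), IsSCAC L ω C ∧ C.card = n}

/-!
Upper bound. Let a codeword of weight three cut the cycle `ℤ_L` into arcs `a ≤ b ≤ c`, where `L` is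
even. Then `d⁺` has at least `8` elements, except that it may have only `4` if `c ≤ a + 1`, and only
`6` if the arcs are `a, a, 2a`. Words of the first exceptional kind all have the difference
`⌊(L + 1) / 3⌋` and those of the second kind the difference `L / 2`, so a code contains at most one
of each. As no `d⁺` contains `0` or `1`, a code `C` satisfies `8 |C| ≤ (L - 2) + 4 + 2`.

Lower bound. Let the norm of a residue be its distance to `0`. Two words `{0, x, 2x}` and
`{0, y, 2y}` are compatible as soon as the norms of `x, 2x` differ by at least `2` from those of
`y, 2y`. Modulo `8t`, let `n ≤ (4t - 1) / 3` run through the numbers of even `2`-adic valuation, and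
take `x = n` for even `n` and `x = 4t - n` for odd `n`. The norms `n` and `2n` coming from even `n`,
and `2n` from odd `n`, are even and pairwise distinct, while the norms `4t - n` from odd `n` are odd
and exceed them all, by at least `3` except within one word. Two thirds of all `n` have even
valuation, which gives about `8t / 9` words, more than the required `7t / 8` for large `t`; ten
small values of `t` need individual codes.
-/

section Differences

variable {L : ℕ} {I : Finset (ZMod L)} {x : ZMod L}

theorem mem_dstar : x ∈ dstar I ↔ (∃ p ∈ I, ∃ q ∈ I, p - q = x) ∧ x ≠ 0 := by
  simp only [dstar, dset, mem_sdiff, mem_image, mem_product, mem_singleton, Prod.exists]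
  tauto

theorem mem_dplus : x ∈ dplus I ↔ x ∈ dstar I ∨ x - 1 ∈ dstar I := by
  simp only [dplus, mem_union, mem_image, ← eq_sub_iff_add_eq, exists_eq_right]

theorem zero_notMem_dstar : (0 : ZMod L) ∉ dstar I := fun h => (mem_dstar.1 h).2 rfl

theorem neg_mem_dstar (hx : x ∈ dstar I) : -x ∈ dstar I := by
  obtain ⟨⟨p, hp, q, hq, rfl⟩, hne⟩ := mem_dstar.1 hx
  exact mem_dstar.2 ⟨⟨q, hq, p, hp, (neg_sub p q).symm⟩, neg_ne_zero.2 hne⟩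

theorem natCast_sub_mem_dstar {u v : ℕ} (huv : u < v) (hv : v < L)
    (huI : (u : ZMod L) ∈ I) (hvI : (v : ZMod L) ∈ I) : ((v - u : ℕ) : ZMod L) ∈ dstar I := by
  refine mem_dstar.2 ⟨⟨v, hvI, u, huI, (Nat.cast_sub huv.le).symm⟩, fun h => ?_⟩
  have := Nat.eq_zero_of_dvd_of_lt ((ZMod.natCast_eq_zero_iff _ _).1 h) (by omega)
  omega

theorem natCast_mem_dstar_of_add_eq {u v : ℕ} (huv : u + v = L) (hu : (u : ZMod L) ∈ dstar I) :
    (v : ZMod L) ∈ dstar I := by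
  have : (v : ZMod L) = -u := by
    rw [eq_neg_iff_add_eq_zero, ← Nat.cast_add, add_comm, huv, ZMod.natCast_self]
  exact this ▸ neg_mem_dstar hu

theorem length_le_card_dplus {l : List ℕ} (hl : l.Pairwise (· < ·))
    (hmem : ∀ n ∈ l, n < L ∧ (n : ZMod L) ∈ dplus I) : l.length ≤ #(dplus I) := by
  rw [← List.toFinset_card_of_nodup (hl.imp Nat.ne_of_lt)]
  refine card_le_card_of_injOn (fun n : ℕ => (n : ZMod L))
    (fun n hn => (hmem n (List.mem_toFinset.1 hn)).2) fun m hm n hn hmn => ?_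
  have hmL := (hmem m (List.mem_toFinset.1 hm)).1
  have hnL := (hmem n (List.mem_toFinset.1 hn)).1
  simpa [ZMod.natCast_eq_natCast_iff', Nat.mod_eq_of_lt hmL, Nat.mod_eq_of_lt hnL] using hmn

end Differences

section Gaps

variable {L : ℕ} {I : Finset (ZMod L)}

/-- `I` contains three points cutting the cycle `ℤ_L` into arcs of lengths `a ≤ b ≤ c`; only the
resulting differences are recorded. -/
structure HasGaps (I : Finset (ZMod L)) (a b c : ℕ) : Prop where
  left_le : a ≤ b
  le_right : b ≤ c
  sum_eq : a + b + c = L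
  left_mem : (a : ZMod L) ∈ dstar I
  middle_mem : (b : ZMod L) ∈ dstar I
  right_mem : (c : ZMod L) ∈ dstar I

theorem exists_cyclic_gaps [NeZero L] (hI : #I = 3) :
    ∃ a b c : ℕ, a + b + c = L ∧
      (a : ZMod L) ∈ dstar I ∧ (b : ZMod L) ∈ dstar I ∧ (c : ZMod L) ∈ dstar I := by
  have hcard : #(I.image ZMod.val) = 3 := by
    rw [card_image_of_injective _ (ZMod.val_injective L), hI]
  let e := (I.image ZMod.val).orderEmbOfFin hcard
  have he (i : Fin 3) : e i < L ∧ (e i : ZMod L) ∈ I := by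
    obtain ⟨x, hx, hxe⟩ := mem_image.1 ((I.image ZMod.val).orderEmbOfFin_mem hcard i)
    change x.val = e i at hxe
    rw [← hxe, ZMod.natCast_zmod_val]
    exact ⟨x.val_lt, hx⟩
  have h01 : e 0 < e 1 := e.strictMono (by decide)
  have h12 : e 1 < e 2 := e.strictMono (by decide)
  have h2 := (he 2).1
  refine ⟨e 1 - e 0, e 2 - e 1, L - (e 2 - e 0), by omega,
    natCast_sub_mem_dstar h01 (he 1).1 (he 0).2 (he 1).2,
    natCast_sub_mem_dstar h12 h2 (he 1).2 (he 2).2, ?_⟩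
  exact natCast_mem_dstar_of_add_eq (u := e 2 - e 0) (by omega)
    (natCast_sub_mem_dstar (h01.trans h12) h2 (he 0).2 (he 2).2)

theorem exists_hasGaps [NeZero L] (hI : #I = 3) : ∃ a b c, HasGaps I a b c := by
  obtain ⟨a, b, c, hsum, ha, hb, hc⟩ := exists_cyclic_gaps hI
  wlog hab : a ≤ b generalizing a b
  · exact this b a (by omega) hb ha (by omega)
  rcases le_total b c with hbc | hcb
  · exact ⟨a, b, c, hab, hbc, hsum, ha, hb, hc⟩
  rcases le_total a c with hac | hca
  · exact ⟨a, c, b, hac, hcb, by omega, ha, hc, hb⟩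
  · exact ⟨c, a, b, hca, hab, by omega, hc, ha, hb⟩

namespace HasGaps

variable {a b c : ℕ}

theorem natCast_mem_dplus (h : HasGaps I a b c) (ha2 : 2 ≤ a) :
    ∀ w ∈ [a, b, c, a + b, a + c, b + c], (w < L ∧ (w : ZMod L) ∈ dplus I) ∧
      w + 1 < L ∧ ((w + 1 : ℕ) : ZMod L) ∈ dplus I := by
  intro w hw
  obtain ⟨hab, hbc, hsum, ha, hb, hc⟩ := h
  simp only [List.mem_cons, List.not_mem_nil, or_false] at hw
  have hwL : w + 1 < L := by omega
  have hwI : (w : ZMod L) ∈ dstar I := by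
    rcases hw with rfl | rfl | rfl | rfl | rfl | rfl
    exacts [ha, hb, hc, natCast_mem_dstar_of_add_eq (by omega) hc,
      natCast_mem_dstar_of_add_eq (by omega) hb, natCast_mem_dstar_of_add_eq (by omega) ha]
  exact ⟨⟨by omega, mem_dplus.2 (.inl hwI)⟩, hwL, mem_dplus.2 (.inr (by simpa using hwI))⟩

theorem four_le_card_dplus (h : HasGaps I a b c) (ha2 : 2 ≤ a) : 4 ≤ #(dplus I) := by
  have hmem := h.natCast_mem_dplus ha2
  have hab := h.left_le
  simp only [List.forall_mem_cons] at hmem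
  exact length_le_card_dplus (l := [a, a + 1, a + b, a + b + 1]) (by simp; omega) (by simp_all)

theorem six_le_card_dplus (h : HasGaps I a b c) (ha2 : 2 ≤ a) (hc : a + 2 ≤ c) :
    6 ≤ #(dplus I) := by
  have hmem := h.natCast_mem_dplus ha2
  have hab := h.left_le
  simp only [List.forall_mem_cons] at hmem
  exact length_le_card_dplus (l := [a, a + 1, c, c + 1, b + c, b + c + 1])
    (by simp; omega) (by simp_all)

theorem eight_le_card_dplus (h : HasGaps I a b c) (hL : Even L) (ha2 : 2 ≤ a)
    (hnear : a + 2 ≤ c) (hhalf : ¬(a = b ∧ c = a + b)) : 8 ≤ #(dplus I) := by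
  have hmem := h.natCast_mem_dplus ha2
  simp only [List.forall_mem_cons] at hmem
  obtain ⟨hab, hbc, hsum, -, -, -⟩ := h
  obtain ⟨k, hk⟩ := hL
  have eight_le {l : List ℕ} (hlen : l.length = 8) := hlen ▸ length_le_card_dplus (I := I) (l := l)
  rcases hab.eq_or_lt with rfl | hab
  · rcases lt_or_ge c (a + a) with hc | hc
    · exact eight_le (l := [a, a + 1, c, c + 1, a + a, a + a + 1, a + c, a + c + 1]) rfl
        (by simp; omega) (by simp_all)
    · exact eight_le (l := [a, a + 1, a + a, a + a + 1, c, c + 1, a + c, a + c + 1]) rfl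
        (by simp; omega) (by simp_all)
  rcases hbc.eq_or_lt with rfl | hbc
  · exact eight_le (l := [a, a + 1, b, b + 1, a + b, a + b + 1, b + b, b + b + 1]) rfl
      (by simp; omega) (by simp_all)
  rcases lt_trichotomy c (a + b) with hc | hc | hc
  · rcases eq_or_ne c (b + 1) with hcb | hcb
    · exact eight_le (l := [a, b, c, c + 1, a + b, a + c, b + c, b + c + 1]) rfl
        (by simp; omega) (by simp_all)
    · exact eight_le (l := [a, b, c, a + b, a + b + 1, a + c, b + c, b + c + 1]) rfl
        (by simp; omega) (by simp_all)
  · exact eight_le (l := [a, b, b + 1, c, c + 1, a + c, b + c, b + c + 1]) rfl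
      (by simp; omega) (by simp_all)
  · exact eight_le (l := [a, b, a + b, c, c + 1, a + c, b + c, b + c + 1]) rfl
      (by simp; omega) (by simp_all)

end HasGaps

theorem eight_le_card_dplus_add_ite [NeZero L] (hL : Even L) (hI : #I = 3)
    (hone : (1 : ZMod L) ∉ dstar I) :
    8 ≤ #(dplus I) + (if ((L / 2 : ℕ) : ZMod L) ∈ dstar I then 2 else 0)
      + (if (((L + 1) / 3 : ℕ) : ZMod L) ∈ dstar I then 4 else 0) := by
  obtain ⟨a, b, c, h⟩ := exists_hasGaps hI
  obtain ⟨hab, hbc, hsum, ha, hb, hc⟩ := id h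
  have ha0 : a ≠ 0 := by
    rintro rfl
    exact zero_notMem_dstar (by simpa using ha)
  have ha1 : a ≠ 1 := by
    rintro rfl
    exact hone (by simpa using ha)
  have ha2 : 2 ≤ a := by omega
  rcases lt_or_ge c (a + 2) with hnear | hnear
  · rw [show (L + 1) / 3 = b by omega, if_pos hb]
    have := h.four_le_card_dplus ha2
    omega
  by_cases hhalf : a = b ∧ c = a + b
  · rw [show L / 2 = c by omega, if_pos hc]
    have := h.six_le_card_dplus ha2 hnear
    omega
  · have := h.eight_le_card_dplus hL ha2 hnear hhalf
    omega

end Gaps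

namespace IsSCAC

variable {L ω : ℕ} {C : Finset (Finset (ZMod L))}

theorem card_filter_mem_dstar_le_one (hC : IsSCAC L ω C) (x : ZMod L) :
    #{I ∈ C | x ∈ dstar I} ≤ 1 := by
  refine card_le_one.2 fun I hI J hJ => by_contra fun hne => ?_
  rw [mem_filter] at hI hJ
  exact disjoint_left.1 (hC.2.2 I hI.1 J hJ.1 hne) (mem_dplus.2 (.inl hI.2))
    (mem_dplus.2 (.inl hJ.2))

theorem dplus_subset [NeZero L] (hC : IsSCAC L ω C) {I : Finset (ZMod L)} (hI : I ∈ C) :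
    dplus I ⊆ univ \ {0, 1} := by
  obtain ⟨hone, hneg⟩ := hC.2.1 I hI
  intro x hx
  simp only [mem_sdiff, mem_univ, mem_insert, mem_singleton, true_and, not_or]
  constructor <;> rintro rfl <;> rcases mem_dplus.1 hx with h | h
  · exact zero_notMem_dstar h
  · exact hneg (by simpa using h)
  · exact hone h
  · exact zero_notMem_dstar (by simpa using h)

theorem sum_card_dplus_le [NeZero L] (hL : 1 < L) (hC : IsSCAC L ω C) :
    ∑ I ∈ C, #(dplus I) ≤ L - 2 := by
  have : Fact (1 < L) := ⟨hL⟩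
  calc
    ∑ I ∈ C, #(dplus I) = #(C.biUnion dplus) :=
      (card_biUnion fun I hI J hJ => hC.2.2 I hI J hJ).symm
    _ ≤ #(univ \ {0, 1} : Finset (ZMod L)) :=
      card_le_card (biUnion_subset.2 fun I => hC.dplus_subset)
    _ = L - 2 := by
      rw [card_sdiff_of_subset (subset_univ _), card_univ, ZMod.card, card_pair zero_ne_one]

theorem eight_mul_card_le [NeZero L] (hL : Even L) (hC : IsSCAC L 3 C) : 8 * #C ≤ L + 4 := by
  have hL0 : L ≠ 0 := NeZero.ne L
  have hL2 : 1 < L := by grind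
  have hcharge := sum_le_sum fun I hI =>
    eight_le_card_dplus_add_ite hL (hC.1 I hI) (hC.2.1 I hI).1
  simp only [sum_add_distrib, ← sum_filter, sum_const, smul_eq_mul] at hcharge
  have hhalf := hC.card_filter_mem_dstar_le_one ((L / 2 : ℕ) : ZMod L)
  have hthird := hC.card_filter_mem_dstar_le_one (((L + 1) / 3 : ℕ) : ZMod L)
  have hsum := hC.sum_card_dplus_le hL2
  omega

theorem card_le_MS [NeZero L] (hC : IsSCAC L ω C) : #C ≤ MS L ω :=
  le_csSup ⟨Fintype.card (Finset (ZMod L)), by rintro _ ⟨D, -, rfl⟩; exact card_le_univ D⟩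
    ⟨C, hC, rfl⟩

end IsSCAC

theorem eight_mul_MS_three_le {L : ℕ} [NeZero L] (hL : Even L) : 8 * MS L 3 ≤ L + 4 := by
  have hnonempty : {n | ∃ C : Finset (Finset (ZMod L)), IsSCAC L 3 C ∧ #C = n}.Nonempty :=
    ⟨0, ∅, by simp [IsSCAC], rfl⟩
  have hbound : MS L 3 ≤ (L + 4) / 8 := csSup_le hnonempty <| by
    rintro _ ⟨C, hC, rfl⟩
    have := hC.eight_mul_card_le hL
    omega
  omega

/-- The distance from `x` to `0` on the cycle `ℤ_L`. -/
def cyclicNorm {L : ℕ} (x : ZMod L) : ℕ := x.valMinAbs.natAbs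

section CyclicNorm

variable {L : ℕ} {I J : Finset (ZMod L)}

theorem cyclicNorm_zero : cyclicNorm (0 : ZMod L) = 0 := by simp [cyclicNorm]

theorem cyclicNorm_neg (x : ZMod L) : cyclicNorm (-x) = cyclicNorm x :=
  ZMod.natAbs_valMinAbs_neg x

theorem cyclicNorm_add_le (x y : ZMod L) : cyclicNorm (x + y) ≤ cyclicNorm x + cyclicNorm y :=
  (ZMod.natAbs_valMinAbs_add_le x y).trans (Int.natAbs_add_le _ _)

theorem cyclicNorm_natCast {a : ℕ} (ha : 2 * a ≤ L) : cyclicNorm (a : ZMod L) = a := by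
  rw [cyclicNorm, ZMod.valMinAbs_natCast_of_le_half (by omega), Int.natAbs_natCast]

theorem cyclicNorm_one_le : cyclicNorm (1 : ZMod L) ≤ 1 := by
  rcases lt_or_ge L 2 with hL | hL
  · interval_cases L <;> decide
  · simpa using (cyclicNorm_natCast (a := 1) hL).le

theorem cyclicNorm_two_mul_natCast {a : ℕ} (ha : 2 * a < L) :
    cyclicNorm (2 * a : ZMod L) = min (2 * a) (L - 2 * a) := by
  have : NeZero L := ⟨by omega⟩
  have hval : (2 * a : ZMod L).val = 2 * a := by
    exact_mod_cast ZMod.val_natCast_of_lt ha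
  rw [cyclicNorm, ZMod.valMinAbs_natAbs_eq_min, hval]

theorem dist_cyclicNorm_le (x y : ZMod L) :
    Nat.dist (cyclicNorm x) (cyclicNorm y) ≤ cyclicNorm (x - y) := by
  have hx := cyclicNorm_add_le (x - y) y
  have hy := cyclicNorm_add_le (-(x - y)) x
  rw [sub_add_cancel] at hx
  rw [cyclicNorm_neg, neg_sub, sub_add_cancel] at hy
  unfold Nat.dist
  omega

theorem disjoint_dplus_of_two_le_dist
    (h : ∀ x ∈ dstar I, ∀ y ∈ dstar J, 2 ≤ Nat.dist (cyclicNorm x) (cyclicNorm y)) :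
    Disjoint (dplus I) (dplus J) := by
  have hne {x y e : ZMod L} (hx : x ∈ dstar I) (hy : y ∈ dstar J) (he : cyclicNorm e ≤ 1) :
      x - y ≠ e := by
    rintro rfl
    have := (h x hx y hy).trans (dist_cyclicNorm_le x y)
    omega
  have hzero : cyclicNorm (0 : ZMod L) ≤ 1 := by simp [cyclicNorm_zero]
  have hneg : cyclicNorm (-1 : ZMod L) ≤ 1 := cyclicNorm_neg (1 : ZMod L) ▸ cyclicNorm_one_le
  refine disjoint_left.2 fun z hI hJ => ?_
  rcases mem_dplus.1 hI with hI | hI <;> rcases mem_dplus.1 hJ with hJ | hJ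
  · exact hne hI hJ hzero (sub_self z)
  · exact hne hI hJ cyclicNorm_one_le (by ring)
  · exact hne hI hJ hneg (by ring)
  · exact hne hI hJ hzero (sub_self _)

end CyclicNorm

/-- The equi-difference codeword `{0, x, 2x}` generated by `x`. -/
def equiDiffWord {L : ℕ} (x : ZMod L) : Finset (ZMod L) := {0, x, 2 * x}

/-- The cyclic norms of the differences `±a, ±2a` of `equiDiffWord a`, provided `2 * a < L`. -/
def equiDiffNorms (L a : ℕ) : Finset ℕ := {a, min (2 * a) (L - 2 * a)}

/-- The generators in `A` yield equi-difference codewords that form an SCAC of length `L`, as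
witnessed by the cyclic norms of their differences. -/
def IsSpread (L : ℕ) (A : Finset ℕ) : Prop :=
  (∀ a ∈ A, ∀ v ∈ equiDiffNorms L a, 2 ≤ v) ∧
  ∀ a ∈ A, ∀ b ∈ A, a ≠ b → ∀ v ∈ equiDiffNorms L a, ∀ w ∈ equiDiffNorms L b, 2 ≤ Nat.dist v w

instance (L : ℕ) (A : Finset ℕ) : Decidable (IsSpread L A) := by
  unfold IsSpread
  infer_instance

section EquiDifference

variable {L : ℕ}

theorem mem_dstar_equiDiffWord {x y : ZMod L} (hy : y ∈ dstar (equiDiffWord x)) :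
    (y = x ∨ y = -x) ∨ y = 2 * x ∨ y = -(2 * x) := by
  obtain ⟨⟨p, hp, q, hq, rfl⟩, hne⟩ := mem_dstar.1 hy
  simp only [equiDiffWord, mem_insert, mem_singleton] at hp hq
  rcases hp with rfl | rfl | rfl <;> rcases hq with rfl | rfl | rfl <;> grind

theorem card_equiDiffWord {x : ZMod L} (hx : x ≠ 0) (h2x : 2 * x ≠ 0) :
    #(equiDiffWord x) = 3 := by
  have hne : x ≠ 2 * x := fun h => hx (by linear_combination -h)
  exact card_eq_three.2 ⟨0, x, 2 * x, hx.symm, h2x.symm, hne, rfl⟩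

theorem cyclicNorm_mem_equiDiffNorms {a : ℕ} (ha : 2 * a < L) {y : ZMod L}
    (hy : y ∈ dstar (equiDiffWord (a : ZMod L))) : cyclicNorm y ∈ equiDiffNorms L a := by
  have hsingle := cyclicNorm_natCast ha.le
  have hdouble := cyclicNorm_two_mul_natCast ha
  rcases mem_dstar_equiDiffWord hy with (rfl | rfl) | rfl | rfl <;>
    simp [equiDiffNorms, cyclicNorm_neg, hsingle, hdouble]

namespace IsSpread

variable {A : Finset ℕ} {a b : ℕ}

theorem bounds (hA : IsSpread L A) (ha : a ∈ A) : 2 ≤ a ∧ 2 * a + 2 ≤ L := by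
  have h := hA.1 a ha
  simp only [equiDiffNorms, mem_insert, mem_singleton, forall_eq_or_imp, forall_eq] at h
  omega

theorem natCast_ne_zero (hA : IsSpread L A) (ha : a ∈ A) :
    (a : ZMod L) ≠ 0 ∧ (2 * a : ZMod L) ≠ 0 := by
  have hbounds := hA.bounds ha
  have hne (n : ℕ) (hn : n ≠ 0) (hnL : n < L) : (n : ZMod L) ≠ 0 := fun h =>
    hn (Nat.eq_zero_of_dvd_of_lt ((ZMod.natCast_eq_zero_iff n L).1 h) hnL)
  exact ⟨hne a (by omega) (by omega), by exact_mod_cast hne (2 * a) (by omega) (by omega)⟩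

theorem two_le_cyclicNorm (hA : IsSpread L A) (ha : a ∈ A) {x : ZMod L}
    (hx : x ∈ dstar (equiDiffWord (a : ZMod L))) : 2 ≤ cyclicNorm x :=
  hA.1 a ha _ (cyclicNorm_mem_equiDiffNorms (by have := hA.bounds ha; omega) hx)

theorem disjoint_dplus (hA : IsSpread L A) (ha : a ∈ A) (hb : b ∈ A) (hab : a ≠ b) :
    Disjoint (dplus (equiDiffWord (a : ZMod L))) (dplus (equiDiffWord (b : ZMod L))) := by
  have hbounds_a := hA.bounds ha
  have hbounds_b := hA.bounds hb
  exact disjoint_dplus_of_two_le_dist fun x hx y hy => hA.2 a ha b hb hab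
    _ (cyclicNorm_mem_equiDiffNorms (by omega) hx) _ (cyclicNorm_mem_equiDiffNorms (by omega) hy)

theorem natCast_mem_dplus (hA : IsSpread L A) (ha : a ∈ A) :
    (a : ZMod L) ∈ dplus (equiDiffWord (a : ZMod L)) := by
  refine mem_dplus.2 (.inl (mem_dstar.2 ⟨⟨a, ?_, 0, ?_, sub_zero _⟩, (hA.natCast_ne_zero ha).1⟩))
  all_goals simp [equiDiffWord]

theorem injOn_equiDiffWord (hA : IsSpread L A) :
    Set.InjOn (fun a : ℕ => equiDiffWord (a : ZMod L)) A := by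
  intro a ha b hb h
  by_contra hab
  have hmem := hA.natCast_mem_dplus ha
  have hdisj := hA.disjoint_dplus ha hb hab
  rw [← show equiDiffWord (a : ZMod L) = equiDiffWord (b : ZMod L) from h] at hdisj
  exact disjoint_left.1 hdisj hmem hmem

theorem isSCAC (hA : IsSpread L A) :
    IsSCAC L 3 (A.image fun a : ℕ => equiDiffWord (a : ZMod L)) := by
  refine ⟨forall_mem_image.2 fun a ha => ?_, forall_mem_image.2 fun a ha => ?_,
    forall_mem_image.2 fun a ha => forall_mem_image.2 fun b hb hab => ?_⟩
  · exact card_equiDiffWord (hA.natCast_ne_zero ha).1 (hA.natCast_ne_zero ha).2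
  · have hone := cyclicNorm_one_le (L := L)
    have hneg := cyclicNorm_neg (1 : ZMod L)
    constructor <;> intro hmem <;> have := hA.two_le_cyclicNorm ha hmem <;> omega
  · exact hA.disjoint_dplus ha hb fun h => hab (h ▸ rfl)

theorem card_le_MS [NeZero L] (hA : IsSpread L A) : #A ≤ MS L 3 := by
  rw [← card_image_of_injOn hA.injOn_equiDiffWord]
  exact hA.isSCAC.card_le_MS

end IsSpread

end EquiDifference

/-- The `n ∈ [1, M]` of even `2`-adic valuation. For each `n ≥ 1`, exactly one of `n` and `2n` has
even valuation, so a number and its double are never both selected. -/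
def evenValuation (M : ℕ) : Finset ℕ := {n ∈ Icc 1 M | Even (padicValNat 2 n)}

section EvenValuation

variable {M n m : ℕ}

theorem padicValNat_two_mul (hn : n ≠ 0) : padicValNat 2 (2 * n) = padicValNat 2 n + 1 := by
  rw [padicValNat.mul two_ne_zero hn, padicValNat.self one_lt_two, add_comm]

theorem mem_evenValuation : n ∈ evenValuation M ↔ (1 ≤ n ∧ n ≤ M) ∧ Even (padicValNat 2 n) := by
  rw [evenValuation, mem_filter, mem_Icc]

theorem ne_two_mul_of_mem_evenValuation (hm : m ∈ evenValuation M) (hn : n ∈ evenValuation M) :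
    m ≠ 2 * n := by
  rw [mem_evenValuation] at hm hn
  rintro rfl
  rw [padicValNat_two_mul (by omega)] at hm
  exact Nat.not_even_iff_odd.2 hn.2.add_one hm.2

theorem filter_not_even_padicValNat (M : ℕ) :
    {n ∈ Icc 1 M | ¬Even (padicValNat 2 n)} = (evenValuation (M / 2)).image (2 * ·) := by
  ext n
  simp only [mem_filter, mem_Icc, mem_image, mem_evenValuation]
  constructor
  · rintro ⟨hn, hodd⟩
    obtain ⟨k, rfl⟩ : 2 ∣ n := dvd_of_one_le_padicValNat (by grind)
    rw [padicValNat_two_mul (by omega), Nat.even_add_one, not_not] at hodd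
    exact ⟨k, ⟨by omega, hodd⟩, rfl⟩
  · rintro ⟨k, ⟨hk, heven⟩, rfl⟩
    rw [padicValNat_two_mul (by omega), Nat.even_add_one, not_not]
    exact ⟨by omega, heven⟩

theorem card_evenValuation_add (M : ℕ) : #(evenValuation M) + #(evenValuation (M / 2)) = M := by
  have hsplit := card_filter_add_card_filter_not (s := Icc 1 M) fun n => Even (padicValNat 2 n)
  rwa [filter_not_even_padicValNat, card_image_of_injective _ (mul_right_injective₀ two_ne_zero),
    Nat.card_Icc, Nat.add_sub_cancel] at hsplit

/-- Eight terms of the alternating sum `∑ (-1)ⁱ ⌊M / 2ⁱ⌋ = #(evenValuation M)`. Each difference is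
nonnegative, so truncated subtraction is exact. -/
def truncatedCount (M : ℕ) : ℕ :=
  (M - M / 2) + (M / 4 - M / 8) + (M / 16 - M / 32) + (M / 64 - M / 128)

theorem truncatedCount_le_card (M : ℕ) : truncatedCount M ≤ #(evenValuation M) := by
  have hstep (N : ℕ) : #(evenValuation N) = N - N / 2 + #(evenValuation (N / 4)) := by
    have h₁ := card_evenValuation_add N
    have h₂ := card_evenValuation_add (N / 2)
    simp only [Nat.div_div_eq_div_mul, Nat.reduceMul] at h₂
    omega
  rw [truncatedCount, hstep M, hstep (M / 4), hstep (M / 4 / 4), hstep (M / 4 / 4 / 4)]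
  simp only [Nat.div_div_eq_div_mul]
  omega

end EvenValuation

/-- For odd `n` the generator `4t - n` replaces `n`: modulo `8t` its double still has norm `2n`,
while its own norm is moved above all the even norms in use. -/
def reflectOdd (t n : ℕ) : ℕ := if n % 2 = 0 then n else 4 * t - n

section ReflectOdd

variable {t M m n : ℕ}

theorem equiDiffNorms_reflectOdd (hn : 2 * n ≤ 4 * t) :
    equiDiffNorms (8 * t) (reflectOdd t n) = {reflectOdd t n, 2 * n} := by
  have hdouble : min (2 * reflectOdd t n) (8 * t - 2 * reflectOdd t n) = 2 * n := by
    unfold reflectOdd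
    split_ifs <;> omega
  rw [equiDiffNorms, hdouble]

theorem two_le_dist_reflectOdd_two_mul (hM : 3 * M + 1 ≤ 4 * t) (hm : m ∈ evenValuation M)
    (hn : n ∈ evenValuation M) (hmn : m ≠ n) : 2 ≤ Nat.dist (reflectOdd t m) (2 * n) := by
  have hdouble := ne_two_mul_of_mem_evenValuation hm hn
  rw [mem_evenValuation] at hm hn
  unfold reflectOdd Nat.dist
  split_ifs <;> omega

theorem two_le_dist_reflectOdd (hM : 3 * M + 1 ≤ 4 * t) (hm : m ∈ evenValuation M)
    (hn : n ∈ evenValuation M) (hmn : m ≠ n) :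
    2 ≤ Nat.dist (reflectOdd t m) (reflectOdd t n) := by
  rw [mem_evenValuation] at hm hn
  unfold reflectOdd Nat.dist
  split_ifs <;> omega

theorem injOn_reflectOdd (hM : 3 * M + 1 ≤ 4 * t) :
    Set.InjOn (reflectOdd t) (evenValuation M) := by
  intro m hm n hn h
  by_contra hmn
  have := two_le_dist_reflectOdd hM hm hn hmn
  rw [h, Nat.dist_self] at this
  omega

theorem isSpread_image_reflectOdd (hM : 3 * M + 1 ≤ 4 * t) :
    IsSpread (8 * t) ((evenValuation M).image (reflectOdd t)) := by
  have hnorms {n : ℕ} (hn : n ∈ evenValuation M) :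
      equiDiffNorms (8 * t) (reflectOdd t n) = {reflectOdd t n, 2 * n} :=
    equiDiffNorms_reflectOdd (by have := mem_evenValuation.1 hn; omega)
  refine ⟨forall_mem_image.2 fun n hn => ?_,
    forall_mem_image.2 fun m hm => forall_mem_image.2 fun n hn hmn => ?_⟩
  · rw [hnorms hn]
    simp only [mem_insert, mem_singleton, forall_eq_or_imp, forall_eq]
    have := mem_evenValuation.1 hn
    unfold reflectOdd
    split_ifs <;> omega
  · replace hmn : m ≠ n := fun h => hmn (h ▸ rfl)
    rw [hnorms hm, hnorms hn]
    simp only [mem_insert, mem_singleton, forall_eq_or_imp, forall_eq]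
    refine ⟨⟨two_le_dist_reflectOdd hM hm hn hmn, two_le_dist_reflectOdd_two_mul hM hm hn hmn⟩,
      Nat.dist_comm _ _ ▸ two_le_dist_reflectOdd_two_mul hM hn hm hmn.symm, ?_⟩
    unfold Nat.dist
    omega

theorem card_evenValuation_le_MS (hM : 3 * M + 1 ≤ 4 * t) :
    #(evenValuation M) ≤ MS (8 * t) 3 := by
  have : NeZero (8 * t) := ⟨by omega⟩
  rw [← card_image_of_injOn (injOn_reflectOdd hM)]
  exact (isSpread_image_reflectOdd hM).card_le_MS

end ReflectOdd

/-- The common value of the lower bounds on `MS (8 * t) 3` claimed for the residues of `t`. -/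
def lowerTarget (t : ℕ) : ℕ :=
  if t % 3 = 0 ∨ t % 8 = 0 ∨ t % 8 = 1 ∨ t % 8 = 6 ∨ t % 8 = 7 then (7 * t + 5) / 8 else 7 * t / 8

/-- Generators, found by computer search, for the lengths `8 * t` at which the family
`evenValuation` falls one codeword short of `lowerTarget t`. -/
def sporadicGenerators : ℕ → Finset ℕ
  | 3 => {2, 6, 8}
  | 8 => {5, 7, 18, 21, 24, 26, 31}
  | 9 => {4, 10, 13, 15, 18, 22, 24, 33}
  | 12 => {4, 11, 13, 15, 17, 19, 28, 32, 36, 45, 47}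
  | 21 => {2, 6, 8, 10, 14, 18, 22, 30, 32, 34, 38, 40, 42, 47, 49, 51, 53, 56, 72}
  | 27 => {5, 7, 18, 22, 24, 26, 30, 34, 56, 73, 75, 77, 79, 81, 83, 85, 87, 89, 92, 94, 98, 100,
      102, 107}
  | 32 => {4, 14, 18, 22, 24, 26, 30, 32, 34, 38, 56, 73, 83, 85, 88, 93, 95, 97, 99, 101, 103, 105,
      107, 118, 120, 122, 125, 127}
  | 33 => {2, 8, 12, 14, 18, 20, 22, 26, 30, 32, 34, 38, 46, 48, 50, 54, 57, 66, 70, 72, 74, 79, 81,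
      83, 85, 88, 111, 127, 129}
  | 36 => {2, 8, 10, 12, 28, 30, 32, 35, 37, 39, 41, 43, 45, 47, 49, 51, 54, 58, 62, 72, 80, 84, 92,
      96, 100, 106, 110, 131, 133, 135, 137, 141}
  | 45 => {2, 6, 8, 10, 22, 24, 26, 30, 32, 34, 36, 38, 40, 42, 46, 50, 54, 56, 58, 88, 96, 98, 104,
      121, 123, 125, 127, 129, 133, 135, 137, 139, 141, 143, 145, 147, 149, 166, 171, 173}
  | _ => ∅

section LowerTarget

variable {t : ℕ}

theorem isSpread_sporadicGenerators : ∀ t < 46, IsSpread (8 * t) (sporadicGenerators t) := by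
  decide +kernel

theorem lowerTarget_le_of_lt :
    ∀ t < 300, (t < 46 ∧ lowerTarget t ≤ #(sporadicGenerators t)) ∨
      lowerTarget t ≤ truncatedCount ((4 * t - 1) / 3) := by
  decide +kernel

theorem lowerTarget_le_truncatedCount (ht : 300 ≤ t) :
    lowerTarget t ≤ truncatedCount ((4 * t - 1) / 3) := by
  have hle : lowerTarget t ≤ (7 * t + 5) / 8 := by
    unfold lowerTarget
    split_ifs <;> omega
  unfold truncatedCount
  omega

theorem lowerTarget_le_MS (ht : t ≠ 0) : lowerTarget t ≤ MS (8 * t) 3 := by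
  have : NeZero (8 * t) := ⟨by omega⟩
  have hfamily : truncatedCount ((4 * t - 1) / 3) ≤ MS (8 * t) 3 :=
    (truncatedCount_le_card _).trans (card_evenValuation_le_MS (by omega))
  rcases lt_or_ge t 300 with hlt | hge
  · rcases lowerTarget_le_of_lt t hlt with ⟨hsmall, h⟩ | h
    · exact h.trans (isSpread_sporadicGenerators t hsmall).card_le_MS
    · exact h.trans hfamily
  · exact (lowerTarget_le_truncatedCount hge).trans hfamily

end LowerTarget

theorem MS_bounds_mod8 (t L : ℕ) (ht : 3 ≤ t) (hL : L = 8 * t) :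
    MS L 3 ≤ L / 8 ∧
    (t % 8 = 0 → 7 * L / 64 ≤ MS L 3) ∧
    (t % 8 = 1 → (7 * L + 8) / 64 ≤ MS L 3) ∧
    (t % 24 = 2 ∨ t % 24 = 10 → (7 * L - 48) / 64 ≤ MS L 3) ∧
    (t % 24 = 3 → (7 * L + 24) / 64 ≤ MS L 3) ∧
    (t % 24 = 4 ∨ t % 24 = 20 → (7 * L - 32) / 64 ≤ MS L 3) ∧
    (t % 24 = 5 ∨ t % 24 = 13 → (7 * L - 24) / 64 ≤ MS L 3) ∧
    (t % 8 = 6 → (7 * L - 16) / 64 ≤ MS L 3) ∧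
    (t % 8 = 7 → (7 * L - 8) / 64 ≤ MS L 3) ∧
    (t % 24 = 11 ∨ t % 24 = 19 → (7 * L - 40) / 64 ≤ MS L 3) ∧
    (t % 24 = 12 → (7 * L + 32) / 64 ≤ MS L 3) ∧
    (t % 24 = 18 → (7 * L + 16) / 64 ≤ MS L 3) ∧
    (t % 24 = 21 → (7 * L + 40) / 64 ≤ MS L 3) := by
  subst hL
  have : NeZero (8 * t) := ⟨by omega⟩
  have hupper : 8 * MS (8 * t) 3 ≤ 8 * t + 4 := eight_mul_MS_three_le ⟨4 * t, by omega⟩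
  have hlower : lowerTarget t ≤ MS (8 * t) 3 := lowerTarget_le_MS (by omega)
  unfold lowerTarget at hlower
  refine ⟨by omega, ?_, ?_, ?_, ?_, ?_, ?_, ?_, ?_, ?_, ?_, ?_, ?_⟩ <;> intro h <;>
    split_ifs at hlower <;> omega
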